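/- Let m ≥ 1 and n ≥ 1 be integers. Then ∑_{k=0}^∞ (-1)^(n-1)/((n+k+1)^(m+1)·C(n+k,k)) = ∑_{k=1}^n (-1)^(k-1)/k^m · C(n,k)·(H_n − H_{n−k}) − ((-1)^m/m!)·D_1, where D_1 is the derivative at x = n of the real function x ↦ (the m-th derivative at z = 1 of z ↦ Γ(x+1)Γ(z)/Γ(z+x)). -/

import Mathlib

/-!
Expanding `(1-t)^(x-1)` in Euler's integral for `Γ(x+1)Γ(z)/Γ(z+x) = x B(z,x)` gives the partial
fraction expansion `∑_{k≥0} (-1)^k (k+1) C(x,k+1) / (z+k)` (`hasSum_beta`). Its `m`-th derivative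
in `z` at `1` is `(-1)^m m! ∑_{k≥1} (-1)^(k-1) C(x,k) / k^m` (`iteratedDeriv_pole`). It remains to
differentiate this in `x` at `n`. For `k ≤ n` the derivative of `C(x,k)` at `n` is
`C(n,k) (H_n - H_{n-k})` (`hasDerivAt_choose_of_le`), which accounts for the finite sum; for
`k = n+j+1` it is `(-1)^j / ((n+j+1) C(n+j,j))` (`hasDerivAt_choose_of_lt`), which accounts for the
infinite one.

Every interchange of limits rests on one estimate, `choose_bound`: `C(x,k) = O(k^(-3/2))`
uniformly on the complex disc `|x - n| < 1/2`.
-/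

/-- The harmonic number `H_n = ∑_{k=1}^n 1/k`. -/
noncomputable def H (n : ℕ) : ℝ := ∑ i ∈ Finset.range n, (1 : ℝ) / (i + 1)

open Filter Topology MeasureTheory

/-! ### Growth of the generalized binomial coefficients -/

lemma choose_succ_mul {F : Type*} [Field F] [CharZero F] (x : F) (k : ℕ) :
    ((k : F) + 1) * Ring.choose x (k + 1) = Ring.choose x k * (x - k) := by
  have h := Ring.choose_smul_choose x (n := k + 1) (k := k) (by omega)
  simpa [nsmul_eq_mul, Ring.choose_one_right] using h

lemma choose_succ_mul' {F : Type*} [Field F] [CharZero F] (x : F) (k : ℕ) :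
    ((k : F) + 1) * Ring.choose x (k + 1) = x * Ring.choose (x - 1) k := by
  have h := Ring.choose_smul_choose x (n := k + 1) (k := 1) (by omega)
  simpa [nsmul_eq_mul, Ring.choose_one_right] using h

lemma choose_succ_eq (k : ℕ) : (fun x : ℂ => Ring.choose x (k + 1)) =
    fun x => Ring.choose x k * (x - k) / ((k : ℂ) + 1) := by
  have hk0 : ((k : ℂ) + 1) ≠ 0 := by exact_mod_cast k.succ_ne_zero
  funext x
  rw [← choose_succ_mul]; field_simp

lemma norm_choose_succ (x : ℂ) (k : ℕ) :
    ((k : ℝ) + 1) * ‖Ring.choose x (k + 1)‖ = ‖Ring.choose x k‖ * ‖x - k‖ := by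
  rw [← norm_mul, ← choose_succ_mul, norm_mul]
  congr 1
  exact_mod_cast (Complex.norm_natCast (k + 1)).symm

/-- Near `n ≥ 1` the quantity `|C(x,k)| k^(3/2)` is nonincreasing in `k ≥ n`: the ratio
`|x - k| / (k + 1)` is at most `1 - (3/2) / (k + 1)`, hence by Bernoulli's inequality at most
`(k / (k + 1))^(3/2)`. -/
lemma choose_step {n k : ℕ} (hn : 1 ≤ n) (hk : n ≤ k) {x : ℂ} (hx : ‖x - n‖ < 1 / 2) :
    ‖Ring.choose x (k + 1)‖ * ((k : ℝ) + 1) ^ (3 / 2 : ℝ) ≤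
      ‖Ring.choose x k‖ * (k : ℝ) ^ (3 / 2 : ℝ) := by
  have hk1 : (0 : ℝ) < (k : ℝ) + 1 := by positivity
  have hkn : (n : ℝ) ≤ k := by exact_mod_cast hk
  have hn' : (1 : ℝ) ≤ n := by exact_mod_cast hn
  have h1 : ‖x - k‖ ≤ k - 1 / 2 := by
    have : x - k = (x - n) - ((k - n : ℝ) : ℂ) := by push_cast; ring
    rw [this]
    refine (norm_sub_le _ _).trans ?_
    rw [Complex.norm_real, Real.norm_of_nonneg (by linarith)]
    linarith
  have h2 : ((k : ℝ) - 1 / 2) * ((k : ℝ) + 1) ^ (3 / 2 : ℝ) ≤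
      ((k : ℝ) + 1) * (k : ℝ) ^ (3 / 2 : ℝ) := by
    have hb := one_add_mul_self_le_rpow_one_add (s := -(1 / ((k : ℝ) + 1))) (p := 3 / 2)
      (by rw [neg_le_neg_iff, div_le_one hk1]; linarith) (by norm_num)
    have e1 : (k : ℝ) = (1 + -(1 / ((k : ℝ) + 1))) * ((k : ℝ) + 1) := by field_simp; ring
    have hs : 0 ≤ 1 + -(1 / ((k : ℝ) + 1)) := by
      have : 1 / ((k : ℝ) + 1) ≤ 1 := by rw [div_le_one hk1]; linarith
      linarith
    have e2 : (k : ℝ) ^ (3 / 2 : ℝ) = (1 + -(1 / ((k : ℝ) + 1))) ^ (3 / 2 : ℝ) *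
        ((k : ℝ) + 1) ^ (3 / 2 : ℝ) := by
      rw [← Real.mul_rpow hs hk1.le, ← e1]
    rw [e2, ← mul_assoc]
    gcongr
    calc (k : ℝ) - 1 / 2 = ((k : ℝ) + 1) * (1 + 3 / 2 * -(1 / ((k : ℝ) + 1))) := by
          field_simp; ring
      _ ≤ _ := by gcongr
  have h3 := norm_choose_succ x k
  refine le_of_mul_le_mul_left ?_ hk1
  calc ((k : ℝ) + 1) * (‖Ring.choose x (k + 1)‖ * ((k : ℝ) + 1) ^ (3 / 2 : ℝ))
      = ‖Ring.choose x k‖ * (‖x - k‖ * ((k : ℝ) + 1) ^ (3 / 2 : ℝ)) := by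
        rw [← mul_assoc, h3, mul_assoc]
    _ ≤ ‖Ring.choose x k‖ * ((k - 1 / 2) * ((k : ℝ) + 1) ^ (3 / 2 : ℝ)) := by gcongr
    _ ≤ ‖Ring.choose x k‖ * (((k : ℝ) + 1) * (k : ℝ) ^ (3 / 2 : ℝ)) := by gcongr
    _ = _ := by ring

/-- A growing bound, which serves only for the finitely many `k ≤ n`. -/
lemma choose_crude (n k : ℕ) {x : ℂ} (hx : ‖x - n‖ < 1 / 2) :
    ‖Ring.choose x k‖ ≤ ((n : ℝ) + 1) ^ k := by
  induction k with
  | zero => simp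
  | succ k ih =>
    have hk1 : (0 : ℝ) < (k : ℝ) + 1 := by positivity
    have h3 := norm_choose_succ x k
    have h4 : ‖x - k‖ ≤ ((k : ℝ) + 1) * (n + 1) := by
      have : x - k = (x - n) + n - k := by ring
      rw [this]
      refine (norm_sub_le _ _).trans ?_
      have := norm_add_le (x - n) (n : ℂ)
      simp only [Complex.norm_natCast] at this ⊢
      nlinarith [Nat.cast_nonneg (α := ℝ) n, Nat.cast_nonneg (α := ℝ) k,
        mul_nonneg (Nat.cast_nonneg (α := ℝ) n) (Nat.cast_nonneg (α := ℝ) k)]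
    refine le_of_mul_le_mul_left ?_ hk1
    rw [h3]
    calc _ ≤ ((n : ℝ) + 1) ^ k * (((k : ℝ) + 1) * (n + 1)) := by gcongr
      _ = _ := by ring

/-- Uniform decay of the binomial coefficients near `n`. The exponent `3/2` exceeds `1`, so this
single estimate makes both the expansion of the Beta function and its term-by-term derivatives
absolutely convergent. -/
lemma choose_bound {n : ℕ} (hn : 1 ≤ n) : ∃ K : ℝ, 0 ≤ K ∧ ∀ x : ℂ, ‖x - n‖ < 1 / 2 → ∀ k : ℕ,
    ‖Ring.choose x (k + 1)‖ ≤ K * ((k : ℝ) + 1) ^ (-(3 / 2) : ℝ) := by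
  refine ⟨((n : ℝ) + 1) ^ n * (n : ℝ) ^ (3 / 2 : ℝ), by positivity, fun x hx k => ?_⟩
  suffices h : ∀ k : ℕ, ‖Ring.choose x k‖ * (k : ℝ) ^ (3 / 2 : ℝ) ≤
      ((n : ℝ) + 1) ^ n * (n : ℝ) ^ (3 / 2 : ℝ) by
    have := h (k + 1)
    rw [Real.rpow_neg (by positivity), ← div_eq_mul_inv, le_div_iff₀ (by positivity)]
    exact_mod_cast this
  have small : ∀ k ≤ n, ‖Ring.choose x k‖ * (k : ℝ) ^ (3 / 2 : ℝ) ≤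
      ((n : ℝ) + 1) ^ n * (n : ℝ) ^ (3 / 2 : ℝ) := fun k hk => by
    have : ((n : ℝ) + 1) ^ k ≤ ((n : ℝ) + 1) ^ n :=
      pow_le_pow_right₀ (by linarith [Nat.cast_nonneg (α := ℝ) n]) hk
    have := (choose_crude n k hx).trans this
    gcongr
  intro k
  rcases le_total k n with hk | hk
  · exact small k hk
  · induction k, hk using Nat.le_induction with
    | base => exact small n le_rfl
    | succ k hk ih => 
      push_cast
      exact (choose_step hn hk hx).trans ih

/-! ### Partial fractions of the Beta function -/

/-- Euler's integral for `Γ(x+1)Γ(z)/Γ(z+x) = x B(z,x)`, over the reals. -/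
lemma beta_integral {x z : ℝ} (hx : 0 < x) (hz : 0 < z) :
    Real.Gamma (x + 1) * Real.Gamma z / Real.Gamma (z + x) =
      x * ∫ t in Set.Ioo (0 : ℝ) 1, t ^ (z - 1) * (1 - t) ^ (x - 1) := by
  have h := ProbabilityTheory.beta_eq_betaIntegralReal z x hz hx
  have h2 : Complex.betaIntegral z x =
      ((∫ t in (0:ℝ)..1, t ^ (z - 1) * (1 - t) ^ (x - 1) : ℝ) : ℂ) := by
    rw [Complex.betaIntegral, ← intervalIntegral.integral_ofReal]
    refine intervalIntegral.integral_congr fun t ht => ?_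
    rw [Set.uIcc_of_le zero_le_one] at ht
    rw [Complex.ofReal_mul, Complex.ofReal_cpow ht.1, Complex.ofReal_cpow (by linarith [ht.2])]
    push_cast
    rfl
  rw [h2, Complex.ofReal_re, intervalIntegral.integral_of_le zero_le_one,
    integral_Ioc_eq_integral_Ioo] at h
  rw [← h, Real.Gamma_add_one hx.ne', ProbabilityTheory.beta]
  ring

lemma hasSum_one_sub_rpow (a : ℝ) {t : ℝ} (ht : t ∈ Set.Ioo (0 : ℝ) 1) :
    HasSum (fun k : ℕ => (-1) ^ k * Ring.choose a k * t ^ k) ((1 - t) ^ a) := by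
  have h := (Real.one_add_rpow_hasFPowerSeriesOnBall_zero (a := a)).hasSum (y := -t)
    (by simp [Metric.mem_eball, edist_eq_enorm_sub, enorm_eq_nnnorm]; 
        rw [← NNReal.coe_lt_coe]; simpa [abs_of_pos ht.1] using ht.2)
  simp only [binomialSeries_apply, List.ofFn_const, List.prod_replicate, smul_eq_mul, zero_add] at h
  rw [← sub_eq_add_neg] at h
  have e : (fun k : ℕ => (-1) ^ k * Ring.choose a k * t ^ k) =
      fun k : ℕ => Ring.choose a k * (-t) ^ k := by
    funext k
    rw [neg_pow]; ring
  rwa [e]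

/-- The coefficient `b_k = (-1)^k (k+1) C(x,k+1) = (-1)^k x C(x-1,k)`, which is the residue of
`z ↦ Γ(x+1)Γ(z)/Γ(z+x)` at its pole `z = -k`. -/
noncomputable def coeff (x : ℝ) (k : ℕ) : ℝ := (-1) ^ k * ((k + 1) * Ring.choose x (k + 1))

lemma abs_coeff_le {n : ℕ} {K : ℝ} (hK : ∀ x : ℂ, ‖x - n‖ < 1 / 2 → ∀ k : ℕ,
    ‖Ring.choose x (k + 1)‖ ≤ K * ((k : ℝ) + 1) ^ (-(3 / 2) : ℝ)) {x : ℝ} (hx : |x - n| < 1 / 2)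
    (k : ℕ) : |coeff x k| ≤ ((k : ℝ) + 1) * (K * ((k : ℝ) + 1) ^ (-(3 / 2) : ℝ)) := by
  have := hK x (by rw [← Complex.ofReal_natCast, ← Complex.ofReal_sub, Complex.norm_real]; exact hx) k
  rw [← Complex.ofReal_choose, Complex.norm_real, Real.norm_eq_abs] at this
  rw [coeff, abs_mul, abs_mul, abs_pow, abs_neg, abs_one, one_pow, one_mul,
    abs_of_nonneg (by positivity : (0 : ℝ) ≤ (k : ℝ) + 1)]
  gcongr

lemma summable_base : Summable fun k : ℕ => ((k : ℝ) + 1) ^ (-(3 / 2) : ℝ) := by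
  have := (summable_nat_add_iff 1).2 (Real.summable_nat_rpow (p := -(3 / 2)).2 (by norm_num))
  simpa using this

/-- Partial fraction expansion of `z ↦ Γ(x+1)Γ(z)/Γ(z+x)`: in Euler's integral, expand
`(1-t)^(x-1)` by the binomial series and integrate term by term. -/
lemma hasSum_beta {x z : ℝ} (hx : 0 < x) (hz : 0 < z)
    (hs : Summable fun k : ℕ => |coeff x k| / (z + k)) :
    HasSum (fun k : ℕ => coeff x k / (z + k))
      (Real.Gamma (x + 1) * Real.Gamma z / Real.Gamma (z + x)) := by
  rw [beta_integral hx hz]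
  have hpow : ∀ k : ℕ, IntegrableOn (fun t : ℝ => t ^ (z + k - 1)) (Set.Ioo 0 1) ∧
      ∫ t in Set.Ioo (0 : ℝ) 1, t ^ (z + k - 1) = 1 / (z + k) := fun k => by
    have hk : -1 < z + k - 1 := by linarith [Nat.cast_nonneg (α := ℝ) k]
    constructor
    · have := intervalIntegral.intervalIntegrable_rpow' (a := 0) (b := 1) hk
      exact ((intervalIntegrable_iff_integrableOn_Ioo_of_le zero_le_one).1 this)
    · rw [← integral_Ioc_eq_integral_Ioo, ← intervalIntegral.integral_of_le zero_le_one,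
        integral_rpow (Or.inl hk)]
      simp [Real.zero_rpow (by linarith : z + (k : ℝ) ≠ 0)]
  have hc : ∀ k : ℕ, coeff x k = x * ((-1) ^ k * Ring.choose (x - 1) k) := fun k => by
    rw [coeff, choose_succ_mul']; ring
  have key := hasSum_integral_of_summable_integral_norm
    (μ := volume.restrict (Set.Ioo (0 : ℝ) 1)) (F := fun (k : ℕ) t => coeff x k * t ^ (z + k - 1))
    (fun k => (hpow k).1.const_mul _) ?_
  · simp only [integral_const_mul, (hpow _).2, mul_one_div] at key
    suffices e : x * ∫ t in Set.Ioo (0 : ℝ) 1, t ^ (z - 1) * (1 - t) ^ (x - 1) =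
        ∫ t in Set.Ioo (0 : ℝ) 1, ∑' k : ℕ, coeff x k * t ^ (z + k - 1) by rwa [e]
    rw [← integral_const_mul]
    refine setIntegral_congr_fun measurableSet_Ioo fun t ht => ?_
    have h1 := (hasSum_one_sub_rpow (x - 1) ht).mul_left (x * t ^ (z - 1))
    rw [← mul_assoc, ← h1.tsum_eq]
    refine tsum_congr fun k => ?_
    rw [hc, show z + (k : ℝ) - 1 = z - 1 + k by ring, Real.rpow_add ht.1, Real.rpow_natCast]
    ring
  · refine hs.congr fun k => ?_
    rw [← mul_one_div, ← (hpow k).2, ← integral_const_mul]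
    refine setIntegral_congr_fun measurableSet_Ioo fun t ht => ?_
    rw [norm_mul, Real.norm_eq_abs, Real.norm_of_nonneg (Real.rpow_nonneg ht.1.le _)]

/-! ### Derivatives in `z` -/

/-- The bound on `|b k|` is the one that `abs_coeff_le` gives for `coeff`. The majorant is uniform
for `z > 1/2`, where `z + k ≥ (k + 1) / 2`. -/
lemma pole_majorant {b : ℕ → ℝ} {K : ℝ}
    (hb : ∀ k : ℕ, |b k| ≤ ((k : ℝ) + 1) * (K * ((k : ℝ) + 1) ^ (-(3 / 2) : ℝ))) (p : ℕ) :
    ∃ u : ℕ → ℝ, Summable u ∧ ∀ (k : ℕ) (z : ℝ), z ∈ Set.Ioi (1 / 2 : ℝ) →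
      |b k| / (z + k) ^ (p + 1) ≤ u k := by
  refine ⟨fun k => 2 ^ (p + 1) * (K * ((k : ℝ) + 1) ^ (-(3 / 2) : ℝ)),
    (summable_base.mul_left K).mul_left _, fun k z hz => ?_⟩
  have hz : (1 / 2 : ℝ) < z := hz
  have hk : (0 : ℝ) ≤ k := Nat.cast_nonneg k
  have h1 : ((k : ℝ) + 1) / 2 ≤ z + k := by linarith
  have h2 : ((k : ℝ) + 1) / 2 ^ (p + 1) ≤ (z + k) ^ (p + 1) := by
    calc ((k : ℝ) + 1) / 2 ^ (p + 1) ≤ ((k : ℝ) + 1) ^ (p + 1) / 2 ^ (p + 1) := by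
          gcongr
          exact le_self_pow₀ (by linarith) (by omega)
      _ = (((k : ℝ) + 1) / 2) ^ (p + 1) := by rw [div_pow]
      _ ≤ _ := by gcongr
  have hQ : 0 ≤ K * ((k : ℝ) + 1) ^ (-(3 / 2) : ℝ) := by
    have := (abs_nonneg _).trans (hb k)
    exact nonneg_of_mul_nonneg_right this (by positivity)
  rw [div_le_iff₀ (by positivity)]
  calc |b k| ≤ _ := hb k
    _ = 2 ^ (p + 1) * (K * ((k : ℝ) + 1) ^ (-(3 / 2) : ℝ)) * (((k : ℝ) + 1) / 2 ^ (p + 1)) := by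
      field_simp
    _ ≤ _ := by gcongr

lemma summable_pole {b : ℕ → ℝ} {K : ℝ}
    (hb : ∀ k : ℕ, |b k| ≤ ((k : ℝ) + 1) * (K * ((k : ℝ) + 1) ^ (-(3 / 2) : ℝ))) (p : ℕ)
    {z : ℝ} (hz : 1 / 2 < z) : Summable fun k : ℕ => |b k| / (z + k) ^ (p + 1) := by
  obtain ⟨u, hu, hu'⟩ := pole_majorant hb p
  exact hu.of_nonneg_of_le (fun k => by positivity) fun k => hu' k z hz

lemma hasDerivAt_pole {b : ℕ → ℝ} {K : ℝ}
    (hb : ∀ k : ℕ, |b k| ≤ ((k : ℝ) + 1) * (K * ((k : ℝ) + 1) ^ (-(3 / 2) : ℝ))) (p : ℕ)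
    {z : ℝ} (hz : 1 / 2 < z) :
    HasDerivAt (fun z : ℝ => ∑' k : ℕ, b k / (z + k) ^ (p + 1))
      (-((p : ℝ) + 1) * ∑' k : ℕ, b k / (z + k) ^ (p + 2)) z := by
  obtain ⟨u, hu, hu'⟩ := pole_majorant hb (p + 1)
  rw [← tsum_mul_left]
  have hpos : ∀ (k : ℕ) (y : ℝ), y ∈ Set.Ioi (1 / 2 : ℝ) → 0 < y + k := fun k y hy => by
    have : (1 / 2 : ℝ) < y := hy
    positivity
  refine hasDerivAt_tsum_of_isPreconnected (g := fun k z => b k / (z + k) ^ (p + 1))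
    (g' := fun k z => -((p : ℝ) + 1) * (b k / (z + k) ^ (p + 2))) (t := Set.Ioi (1 / 2 : ℝ))
    (u := fun k => ((p : ℝ) + 1) * u k)
    (hu.mul_left _) isOpen_Ioi isPreconnected_Ioi (fun k y hy => ?_) (fun k y hy => ?_)
    (y₀ := z) hz ?_ hz
  · have h0 := hpos k y hy
    have := (((hasDerivAt_id y).add_const (k : ℝ)).fun_pow (p + 1)).fun_inv (by positivity)
      |>.const_mul (b k)
    simp only [id, ← div_eq_mul_inv] at this
    convert! this using 1
    rw [Nat.add_sub_cancel]
    push_cast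
    field_simp
    ring
  · rw [norm_mul, norm_neg, norm_div, Real.norm_of_nonneg (by positivity : (0 : ℝ) ≤ (p : ℝ) + 1),
      Real.norm_of_nonneg (pow_nonneg (hpos k y hy).le _)]
    exact mul_le_mul_of_nonneg_left (hu' k y hy) (by positivity)
  · refine .of_norm ((summable_pole hb p hz).congr fun k => ?_)
    rw [norm_div, Real.norm_of_nonneg (pow_nonneg (hpos k z hz).le _), Real.norm_eq_abs]

lemma iteratedDeriv_pole {b : ℕ → ℝ} {K : ℝ}
    (hb : ∀ k : ℕ, |b k| ≤ ((k : ℝ) + 1) * (K * ((k : ℝ) + 1) ^ (-(3 / 2) : ℝ))) (p : ℕ)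
    {f : ℝ → ℝ} (hf : ∀ z : ℝ, 1 / 2 < z → f z = ∑' k : ℕ, b k / (z + k))
    {z : ℝ} (hz : 1 / 2 < z) :
    iteratedDeriv p f z = (-1) ^ p * p.factorial * ∑' k : ℕ, b k / (z + k) ^ (p + 1) := by
  induction p generalizing z with
  | zero => simp [hf z hz]
  | succ p ih =>
    rw [iteratedDeriv_succ]
    have he : iteratedDeriv p f =ᶠ[𝓝 z]
        fun z => (-1) ^ p * p.factorial * ∑' k : ℕ, b k / (z + k) ^ (p + 1) := by
      filter_upwards [isOpen_Ioi.mem_nhds (show z ∈ Set.Ioi (1 / 2) from hz)] with y hy using ih hy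
    rw [he.deriv_eq, ((hasDerivAt_pole hb p hz).const_mul _).deriv, Nat.factorial_succ]
    push_cast
    ring

/-! ### Derivatives of binomial coefficients at `n` -/

lemma hasDerivAt_choose_of_le {n k : ℕ} (hk : k ≤ n) :
    HasDerivAt (fun x : ℂ => Ring.choose x k) ((n.choose k * (H n - H (n - k)) : ℝ) : ℂ) n := by
  induction k with
  | zero => simpa using hasDerivAt_const (n : ℂ) (1 : ℂ)
  | succ k ih =>
    have h := ((ih (by omega)).mul ((hasDerivAt_id (n : ℂ)).sub_const (k : ℂ))).div_const
      ((k : ℂ) + 1)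
    have hk0 : ((k : ℂ) + 1) ≠ 0 := by exact_mod_cast k.succ_ne_zero
    rw [choose_succ_eq]
    convert! h using 1
    obtain ⟨d, rfl⟩ : ∃ d, n = d + k + 1 := ⟨n - (k + 1), by omega⟩
    have hc : ((d + k + 1).choose (k + 1) : ℂ) * (k + 1) = (d + k + 1).choose k * (d + 1) := by
      have := Nat.choose_succ_right_eq (d + k + 1) k
      rw [show d + k + 1 - k = d + 1 by omega] at this
      exact_mod_cast this
    have hH : H (d + 1) = H d + 1 / ((d : ℝ) + 1) := by
      rw [H, Finset.sum_range_succ, ← H]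
    have hd0 : ((d : ℂ) + 1) ≠ 0 := by exact_mod_cast d.succ_ne_zero
    rw [show d + k + 1 - (k + 1) = d by omega, show d + k + 1 - k = d + 1 by omega, hH,
      eq_div_iff hk0, Ring.choose_natCast]
    simp only [id]
    push_cast
    rw [mul_right_comm, hc]
    field_simp
    ring

/-- Beyond `n` the value `C(n,k)` vanishes but the derivative does not; these derivatives produce
the infinite series. -/
lemma hasDerivAt_choose_of_lt (n j : ℕ) :
    HasDerivAt (fun x : ℂ => Ring.choose x (n + j + 1))
      (((-1) ^ j / ((n + j + 1) * (n + j).choose j) : ℝ) : ℂ) n := by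
  induction j with
  | zero =>
    have h := ((hasDerivAt_choose_of_le (le_refl n)).mul
      ((hasDerivAt_id (n : ℂ)).sub_const (n : ℂ))).div_const ((n : ℂ) + 1)
    rw [add_zero, choose_succ_eq]
    convert! h using 1
    simp [Ring.choose_natCast]
  | succ j ih =>
    have h := (ih.mul ((hasDerivAt_id (n : ℂ)).sub_const ((n + j + 1 : ℕ) : ℂ))).div_const
      (((n + j + 1 : ℕ) : ℂ) + 1)
    rw [← add_assoc n j 1, choose_succ_eq]
    convert! h using 1
    have hz : Ring.choose (n : ℂ) (n + j + 1) = 0 := by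
      rw [Ring.choose_natCast, Nat.choose_eq_zero_of_lt (by omega), Nat.cast_zero]
    have hc : ((n + j + 1).choose (j + 1) : ℂ) * (j + 1) = (n + j + 1) * (n + j).choose j := by
      exact_mod_cast (Nat.add_one_mul_choose_eq (n + j) j).symm
    have h1 : ((n + j).choose j : ℂ) ≠ 0 := by
      exact_mod_cast (Nat.choose_pos (by omega)).ne'
    have h2 : ((n + j + 1).choose (j + 1) : ℂ) ≠ 0 := by
      exact_mod_cast (Nat.choose_pos (by omega)).ne'
    have h3 : ((n : ℂ) + j + 1) ≠ 0 := by exact_mod_cast (n + j).succ_ne_zero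
    have h4 : ((n : ℂ) + j + 1 + 1) ≠ 0 := by exact_mod_cast (n + j + 1).succ_ne_zero
    have h6 : ((n : ℂ) + (j + 1) + 1) ≠ 0 := by rwa [← add_assoc]
    rw [hz]
    simp only [id]
    push_cast
    rw [← hc]
    have h5 : ((j : ℂ) + 1) ≠ 0 := by exact_mod_cast j.succ_ne_zero
    rw [pow_succ]
    field_simp
    ring

/-! ### Differentiating the series in `x` -/

/-- For integers `m ≥ 1` and `n ≥ 1`,
`∑_{k=0}^∞ (-1)^(n-1)/((n+k+1)^(m+1)·C(n+k,k))
  = ∑_{k=1}^n (-1)^(k-1)/k^m · C(n,k)·(H_n − H_{n−k}) − ((-1)^m/m!)·D₁`,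
where `D₁ = ∂/∂x [∂^m/∂z^m Γ(x+1)Γ(z)/Γ(z+x)]` at `x = n`, `z = 1`. -/
theorem sum_inv_binom_eq (m n : ℕ) (hm : 1 ≤ m) (hn : 1 ≤ n) :
    (∑' k : ℕ, (-1 : ℝ) ^ (n + 1) /
        ((n + k + 1 : ℝ) ^ (m + 1) * (Nat.choose (n + k) k : ℝ))) =
      (∑ k ∈ Finset.Icc 1 n, (-1 : ℝ) ^ (k + 1) / (k : ℝ) ^ m *
        (Nat.choose n k : ℝ) * (H n - H (n - k))) -
      (-1 : ℝ) ^ m / Nat.factorial m *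
        deriv
          (fun x : ℝ =>
            iteratedDeriv m
              (fun z : ℝ => Real.Gamma (x + 1) * Real.Gamma z / Real.Gamma (z + x)) 1)
          (n : ℝ) := by
  obtain ⟨K, hK0, hK⟩ := choose_bound hn
  have hn' : (1 : ℝ) ≤ n := by exact_mod_cast hn
  -- `F k` is, up to the factor `(-1)^m m!`, the `m`-th derivative at `z = 1` of the `k`-th partial
  -- fraction, extended to complex `x`, where the locally uniform bound alone justifies
  -- differentiating the series term by term.
  set U : Set ℂ := Metric.ball (n : ℂ) (1 / 2) with hU
  set F : ℕ → ℂ → ℂ := fun k x => (-1) ^ k / ((k : ℂ) + 1) ^ m * Ring.choose x (k + 1) with hF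
  have hnU : (n : ℂ) ∈ U := Metric.mem_ball_self (by norm_num)
  have hchoose : ∀ k, Differentiable ℂ fun x : ℂ => Ring.choose x k := fun k => by
    induction k with
    | zero => simp
    | succ k ih =>
      rw [choose_succ_eq]
      fun_prop
  have hdiff : ∀ k, Differentiable ℂ (F k) := fun k => (hchoose _).const_mul _
  have hle : ∀ (k : ℕ) (w : ℂ), w ∈ U → ‖F k w‖ ≤ K * ((k : ℝ) + 1) ^ (-(3 / 2) : ℝ) := by
    intro k w hw
    have h1 := hK w (by rwa [hU, mem_ball_iff_norm] at hw) k
    have h2 : ‖(-1) ^ k / ((k : ℂ) + 1) ^ m‖ ≤ 1 := by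
      have : ((k : ℂ) + 1) = ((k + 1 : ℕ) : ℂ) := by push_cast; ring
      rw [norm_div, norm_pow, norm_neg, norm_one, one_pow, norm_pow, this, Complex.norm_natCast]
      apply div_le_one_of_le₀ _ (by positivity)
      exact one_le_pow₀ (by exact_mod_cast Nat.le_add_left 1 k)
    rw [hF, norm_mul]
    exact (mul_le_of_le_one_left (norm_nonneg _) h2).trans h1
  have hsum := Complex.hasSum_deriv_of_summable_norm (summable_base.mul_left K)
    (fun k => (hdiff k).differentiableOn) Metric.isOpen_ball hle hnU
  have hG := ((Complex.differentiableOn_tsum_of_summable_norm (summable_base.mul_left K)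
    (fun k => (hdiff k).differentiableOn) Metric.isOpen_ball hle).differentiableAt
      (Metric.isOpen_ball.mem_nhds hnU)).hasDerivAt
  have hreal : HasDerivAt (fun x : ℝ => (∑' k, F k x).re)
      (deriv (fun w => ∑' k, F k w) n).re (n : ℝ) :=
    HasDerivAt.real_of_complex (z := (n : ℝ)) (by rw [Complex.ofReal_natCast]; exact hG)
  have hfun : (fun x : ℝ => iteratedDeriv m
      (fun z : ℝ => Real.Gamma (x + 1) * Real.Gamma z / Real.Gamma (z + x)) 1) =ᶠ[𝓝 (n : ℝ)]
      fun x => (-1) ^ m * m.factorial * (∑' k, F k x).re := by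
    filter_upwards [Metric.ball_mem_nhds (n : ℝ) (by norm_num : (0 : ℝ) < 1 / 2)] with x hx
    rw [Metric.mem_ball, Real.dist_eq] at hx
    have hb := abs_coeff_le hK hx
    have hx0 : 0 < x := by linarith [(abs_lt.1 hx).1]
    rw [iteratedDeriv_pole hb m (fun z hz => ?_) (by norm_num)]
    · congr 1
      rw [← Complex.ofReal_re (∑' k : ℕ, coeff x k / (1 + (k : ℝ)) ^ (m + 1)), Complex.ofReal_tsum]
      congr 1
      refine tsum_congr fun k => ?_
      have hk0 : ((k : ℂ) + 1) ≠ 0 := by exact_mod_cast k.succ_ne_zero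
      rw [coeff, hF, add_comm (1 : ℝ)]
      push_cast [Complex.ofReal_choose]
      field_simp
      ring
    · exact (hasSum_beta hx0 (by linarith) (by simpa using summable_pole hb 0 hz)).tsum_eq.symm
  rw [hfun.deriv_eq, (hreal.const_mul _).deriv, ← mul_assoc]
  have hsign : (-1 : ℝ) ^ m / m.factorial * ((-1) ^ m * m.factorial) = 1 := by
    have : (m.factorial : ℝ) ≠ 0 := by positivity
    rw [div_mul_eq_mul_div, div_eq_iff this, ← mul_assoc, ← mul_pow]
    simp
  rw [hsign, one_mul]
  have hder : HasSum (fun k : ℕ => (deriv (F k) n).re) (deriv (fun w => ∑' k, F k w) n).re :=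
    Complex.hasSum_re hsum
  rw [← hder.tsum_eq, ← hder.summable.sum_add_tsum_nat_add n]
  have hhead : ∑ k ∈ Finset.range n, (deriv (F k) n).re =
      ∑ k ∈ Finset.Icc 1 n, (-1 : ℝ) ^ (k + 1) / (k : ℝ) ^ m *
        (Nat.choose n k : ℝ) * (H n - H (n - k)) := by
    rw [← Finset.Ico_add_one_right_eq_Icc, Finset.sum_Ico_eq_sum_range, Nat.add_sub_cancel]
    refine Finset.sum_congr rfl fun k hk => ?_
    have hk : k + 1 ≤ n := Finset.mem_range.1 hk
    rw [((hasDerivAt_choose_of_le hk).const_mul _).deriv]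
    have : (-1) ^ k / ((k : ℂ) + 1) ^ m = (((-1) ^ k / ((k : ℝ) + 1) ^ m : ℝ) : ℂ) := by
      push_cast; rfl
    rw [this, ← Complex.ofReal_mul, Complex.ofReal_re, add_comm 1 k]
    push_cast
    ring
  have htail : ∀ j : ℕ, (deriv (F (j + n)) n).re =
      -((-1 : ℝ) ^ (n + 1) / ((n + j + 1 : ℝ) ^ (m + 1) * (Nat.choose (n + j) j : ℝ))) := by
    intro j
    rw [add_comm j n, ((hasDerivAt_choose_of_lt n j).const_mul _).deriv]
    have : (-1) ^ (n + j) / (((n + j : ℕ) : ℂ) + 1) ^ m =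
      (((-1) ^ (n + j) / ((n : ℝ) + j + 1) ^ m : ℝ) : ℂ) := by
      push_cast; rfl
    rw [this, ← Complex.ofReal_mul, Complex.ofReal_re, div_mul_div_comm, ← neg_div]
    congr 1
    · rw [pow_add, mul_assoc, ← mul_pow]; simp [pow_succ]
    · ring
  rw [hhead, tsum_congr htail, tsum_neg]
  ring
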